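/- (The tilted conditional law of the balancing weight is a valid CDF.) Fix a ∈ 𝒜 and x ∈ 𝒳 with e_a(x) ∈ (0,1). Let E be a random variable with values in (0,1) defined on the same probability space as (X,Y,A) and satisfying E[1{A=a}/E | X = x] = 1. Let H(e|x,a) = P(E ≤ e | X = x, A = a). Then the function K_a(u|x) = ∫_{(0,u]} (e_a(x)/(1−e_a(x)))·((1−e)/e) dH(e|x,a) is a cumulative distribution function: it is nondecreasing, right-continuous, and satisfies lim_{u→1} K_a(u|x) = 1. -/

import Mathlib

open MeasureTheory Set Filter

noncomputable section

namespace MSM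

/-! The integrand is nonnegative on `(0, 1]` and, by the balance condition, has total integral
`εa / (1 - εa) * (1 / εa - 1) = 1`. It is therefore the density with respect to `H` of a probability
measure, and `K_a` is the cdf of that measure. The limit at `1` from the left is the mass of
`(-∞, 1)`, which is `1` because the new measure inherits the support of `H`. -/

open ProbabilityTheory Topology

lemma measureReal_withDensity_ofReal {α : Type*} [MeasurableSpace α] {μ : Measure α} {f : α → ℝ}
    {s : Set α} (hs : MeasurableSet s) (hf : AEStronglyMeasurable f (μ.restrict s))
    (hf_nonneg : 0 ≤ᵐ[μ.restrict s] f) :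
    (μ.withDensity fun x ↦ ENNReal.ofReal (f x)).real s = ∫ x in s, f x ∂μ := by
  rw [measureReal_def, withDensity_apply _ hs, integral_eq_lintegral_of_nonneg_ae hf_nonneg hf]

section Cdf

variable {μ : Measure ℝ} [IsProbabilityMeasure μ]

lemma cdf_eq_measureReal_Ioc {a : ℝ} (ha : ∀ᵐ x ∂μ, a < x) (u : ℝ) :
    cdf μ u = μ.real (Ioc a u) := by
  rw [cdf_eq_real]
  refine measureReal_congr ?_
  filter_upwards [ha] with x hx
  exact propext (and_iff_right hx).symm

variable (μ) in
lemma leftLim_cdf (b : ℝ) : Function.leftLim (cdf μ) b = μ.real (Iio b) := by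
  have hμ : μ (Iio b) = ENNReal.ofReal (Function.leftLim (cdf μ) b) := by
    simpa only [measure_cdf, sub_zero] using (cdf μ).measure_Iio (tendsto_cdf_atBot μ) b
  have h_nonneg : 0 ≤ Function.leftLim (cdf μ) b :=
    (cdf_nonneg μ (b - 1)).trans ((monotone_cdf μ).le_leftLim (sub_one_lt b))
  rw [measureReal_def, hμ, ENNReal.toReal_ofReal h_nonneg]

lemma tendsto_cdf_nhdsLT_one {b : ℝ} (hb : ∀ᵐ x ∂μ, x < b) :
    Tendsto (cdf μ) (𝓝[<] b) (𝓝 1) := by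
  have hμ : μ.real (Iio b) = 1 := by
    rw [measureReal_def, (mem_ae_iff_prob_eq_one measurableSet_Iio).1 hb, ENNReal.toReal_one]
  simpa only [leftLim_cdf, hμ] using (monotone_cdf μ).tendsto_leftLim b

end Cdf

/-- The integrand of `K_a` as a function of the balancing weight `e`, with `ε` standing for the
propensity `e_a(x)`. -/
def balancingTilt (ε e : ℝ) : ℝ := ε / (1 - ε) * ((1 - e) / e)

/-- The law with density `balancingTilt ε` with respect to the law `H` of the balancing weight;
negative values of the density are truncated to `0`. -/
def tiltedBalancingLaw (ε : ℝ) (H : Measure ℝ) : Measure ℝ :=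
  H.withDensity fun e ↦ ENNReal.ofReal (balancingTilt ε e)

section Tilt

variable {ε : ℝ} {H : Measure ℝ}

lemma balancingTilt_nonneg {e : ℝ} (hε : ε ∈ Icc 0 1) (he : e ∈ Icc 0 1) :
    0 ≤ balancingTilt ε e :=
  mul_nonneg (div_nonneg hε.1 (sub_nonneg.2 hε.2)) (div_nonneg (sub_nonneg.2 he.2) he.1)

@[fun_prop]
lemma measurable_balancingTilt (ε : ℝ) : Measurable (balancingTilt ε) := by
  unfold balancingTilt
  fun_prop

lemma integral_balancingTilt [IsFiniteMeasure H] (hH : ∀ᵐ e ∂H, e ≠ 0)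
    (hint : Integrable (fun e ↦ e⁻¹) H) :
    ∫ e, balancingTilt ε e ∂H = ε / (1 - ε) * (∫ e, e⁻¹ ∂H - H.real univ) := by
  have h_tilt : balancingTilt ε =ᵐ[H] fun e ↦ ε / (1 - ε) * (e⁻¹ - 1) := by
    filter_upwards [hH] with e he
    rw [balancingTilt, sub_div, div_self he, one_div]
  rw [integral_congr_ae h_tilt, integral_const_mul, integral_sub hint (integrable_const 1),
    integral_const, smul_eq_mul, mul_one]

lemma integral_balancingTilt_eq_one [IsProbabilityMeasure H] (hε : ε ≠ 1)
    (hH : ∀ᵐ e ∂H, e ≠ 0) (hint : Integrable (fun e ↦ e⁻¹) H) (hbal : ε * ∫ e, e⁻¹ ∂H = 1) :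
    ∫ e, balancingTilt ε e ∂H = 1 := by
  rw [integral_balancingTilt hH hint, probReal_univ, div_mul_eq_mul_div, mul_sub, hbal, mul_one,
    div_self (sub_ne_zero.2 hε.symm)]

lemma tiltedBalancingLaw_absolutelyContinuous (ε : ℝ) (H : Measure ℝ) :
    tiltedBalancingLaw ε H ≪ H :=
  withDensity_absolutelyContinuous _ _

lemma measureReal_tiltedBalancingLaw (hε : ε ∈ Icc 0 1) (hH : ∀ᵐ e ∂H, e ∈ Icc 0 1)
    {s : Set ℝ} (hs : MeasurableSet s) :
    (tiltedBalancingLaw ε H).real s = ∫ e in s, balancingTilt ε e ∂H :=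
  measureReal_withDensity_ofReal hs (by fun_prop) <|
    ae_restrict_of_ae <| hH.mono fun _ ↦ balancingTilt_nonneg hε

lemma isProbabilityMeasure_tiltedBalancingLaw [IsProbabilityMeasure H] (hε : ε ∈ Ico 0 1)
    (hH : ∀ᵐ e ∂H, e ∈ Ioc 0 1) (hint : Integrable (fun e ↦ e⁻¹) H)
    (hbal : ε * ∫ e, e⁻¹ ∂H = 1) :
    IsProbabilityMeasure (tiltedBalancingLaw ε H) := by
  have h_mass : (tiltedBalancingLaw ε H).real univ = 1 := by
    rw [measureReal_tiltedBalancingLaw (Ico_subset_Icc_self hε)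
      (hH.mono fun _ ↦ (Ioc_subset_Icc_self ·)) .univ, setIntegral_univ]
    exact integral_balancingTilt_eq_one hε.2.ne (hH.mono fun _ he ↦ he.1.ne') hint hbal
  exact ⟨(ENNReal.toReal_eq_one_iff _).1 h_mass⟩

lemma cdf_tiltedBalancingLaw [IsProbabilityMeasure (tiltedBalancingLaw ε H)]
    (hε : ε ∈ Icc 0 1) (hH : ∀ᵐ e ∂H, e ∈ Ioc 0 1) (u : ℝ) :
    cdf (tiltedBalancingLaw ε H) u = ∫ e in Ioc 0 u, balancingTilt ε e ∂H := by
  have h_pos : ∀ᵐ e ∂tiltedBalancingLaw ε H, 0 < e :=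
    (tiltedBalancingLaw_absolutelyContinuous ε H).ae_le (hH.mono fun _ ↦ And.left)
  rw [cdf_eq_measureReal_Ioc h_pos, measureReal_tiltedBalancingLaw hε
    (hH.mono fun _ ↦ (Ioc_subset_Icc_self ·)) measurableSet_Ioc]

end Tilt

/-- The tilted conditional law of the balancing weight is a valid CDF.
Let `εa = e_a(x) ∈ (0,1)` and let `H` be the conditional law of the balancing weight `E`
given `X = x, A = a`, a probability measure supported on `(0,1)` with
`εa ⬝ ∫ 1/e dH = 1` (the conditional balance `E[1{A=a}/E | X = x] = 1`).  Then
`K_a(u|x) = ∫_{(0,u]} (εa/(1-εa)) ((1-e)/e) dH(e)` is a cumulative distribution function: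
nondecreasing, right-continuous, with limit `1` as `u → 1⁻`. -/
theorem tilted_balancing_law_is_CDF
    (εa : ℝ) (hεa : εa ∈ Set.Ioo (0:ℝ) 1)
    (H : Measure ℝ) [IsProbabilityMeasure H]
    (hsupp : H (Set.Ioo (0:ℝ) 1) = 1)
    (hint : Integrable (fun e => e⁻¹) H)
    (hbal : εa * ∫ e, e⁻¹ ∂H = 1) :
    Monotone (fun u : ℝ => ∫ e in Set.Ioc 0 u, εa / (1 - εa) * ((1 - e) / e) ∂H) ∧
    (∀ u : ℝ, ContinuousWithinAt
      (fun u' : ℝ => ∫ e in Set.Ioc 0 u', εa / (1 - εa) * ((1 - e) / e) ∂H)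
      (Set.Ici u) u) ∧
    Filter.Tendsto (fun u : ℝ => ∫ e in Set.Ioc 0 u, εa / (1 - εa) * ((1 - e) / e) ∂H)
      (nhdsWithin 1 (Set.Iio 1)) (nhds (1:ℝ)) := by
  have h_ae : ∀ᵐ e ∂H, e ∈ Ioo 0 1 := (mem_ae_iff_prob_eq_one measurableSet_Ioo).2 hsupp
  have h_Ioc : ∀ᵐ e ∂H, e ∈ Ioc 0 1 := h_ae.mono fun _ ↦ (Ioo_subset_Ioc_self ·)
  have h_prob : IsProbabilityMeasure (tiltedBalancingLaw εa H) :=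
    isProbabilityMeasure_tiltedBalancingLaw (Ioo_subset_Ico_self hεa) h_Ioc hint hbal
  have h_cdf : (fun u ↦ ∫ e in Ioc 0 u, εa / (1 - εa) * ((1 - e) / e) ∂H) =
      cdf (tiltedBalancingLaw εa H) :=
    funext fun u ↦ (cdf_tiltedBalancingLaw (Ioo_subset_Icc_self hεa) h_Ioc u).symm
  have h_lt_one : ∀ᵐ e ∂tiltedBalancingLaw εa H, e < 1 :=
    (tiltedBalancingLaw_absolutelyContinuous εa H).ae_le (h_ae.mono fun _ ↦ And.right)
  rw [h_cdf]
  exact ⟨monotone_cdf _, (cdf _).right_continuous, tendsto_cdf_nhdsLT_one h_lt_one⟩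

end MSM
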